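/- For any list T_1, …, T_t of subsets of 𝒦 with compact form of the element rearrangement T*_{t,1}, …, T*_{t,t}, the set function b⁻(T) = I(V_T; Z | Q) satisfies ∑_{i=1}^{t} I(V_{T_i}; Z | Q) ≤ ∑_{i=1}^{t} I(V_{T*_{t,i}}; Z | Q). -/

import Mathlib

open scoped Classical

/-- Probability that the random variable `X` (on the finite sample space `Ω` with
probability mass function `p`) takes the value `a`. -/
noncomputable def prob {Ω : Type} [Fintype Ω] (p : Ω → ℝ) {α : Type} (X : Ω → α)
    (a : α) : ℝ :=
  ∑ ω : Ω, if X ω = a then p ω else 0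

/-- Shannon entropy (base 2) of the random variable `X`, with the convention
`0 · log 0 = 0`. -/
noncomputable def ent {Ω : Type} [Fintype Ω] (p : Ω → ℝ) {α : Type} [Fintype α]
    (X : Ω → α) : ℝ :=
  -∑ a : α, prob p X a * Real.logb 2 (prob p X a)

/-- Conditional mutual information `I(X; Y | Z) = H(X,Z) + H(Y,Z) - H(X,Y,Z) - H(Z)`. -/
noncomputable def condMI {Ω : Type} [Fintype Ω] (p : Ω → ℝ) {α β γ : Type}
    [Fintype α] [Fintype β] [Fintype γ] (X : Ω → α) (Y : Ω → β) (Z : Ω → γ) : ℝ :=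
  ent p (fun ω => (X ω, Z ω)) + ent p (fun ω => (Y ω, Z ω))
    - ent p (fun ω => (X ω, Y ω, Z ω)) - ent p Z

/-- The tuple-valued random variable `V_J = (V_j)_{j ∈ J}`. -/
def VJ {Ω : Type} {K : ℕ} {α : Fin K → Type} (V : (i : Fin K) → Ω → α i)
    (J : Finset (Fin K)) : Ω → ((j : J) → α j) :=
  fun ω j => V j ω

/-- `V_1, …, V_K` are mutually conditionally independent given `Q`:
`P(V_1 = v_1, …, V_K = v_K, Q = q) · P(Q = q)^(K-1) = ∏ i, P(V_i = v_i, Q = q)`. -/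
def CondIndep {Ω : Type} [Fintype Ω] {𝒬 : Type} {K : ℕ} {α : Fin K → Type}
    (p : Ω → ℝ) (Q : Ω → 𝒬) (V : (i : Fin K) → Ω → α i) : Prop :=
  ∀ (q : 𝒬) (v : (i : Fin K) → α i),
    prob p (fun ω => ((fun i => V i ω : (i : Fin K) → α i), Q ω)) (v, q)
        * (prob p Q q) ^ (K - 1)
      = ∏ i : Fin K, prob p (fun ω => (V i ω, Q ω)) (v i, q)

/-- The `i`-th set of the compact form of the element rearrangement of the list
`T 0, …, T (t-1)` of subsets of `Fin K`. -/
def compactForm {K t : ℕ} (T : Fin t → Finset (Fin K)) (i : ℕ) : Finset (Fin K) :=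
  (Finset.powersetCard i (Finset.univ : Finset (Fin t))).sup fun S => S.inf T

section Entropy

variable {Ω : Type} [Fintype Ω] {p : Ω → ℝ}

theorem prob_nonneg (hp : ∀ ω, 0 ≤ p ω) {α : Type} (X : Ω → α) (a : α) : 0 ≤ prob p X a :=
  Finset.sum_nonneg fun ω _ => by split_ifs <;> simp [hp ω]

theorem prob_apply_pos (hp : ∀ ω, 0 ≤ p ω) {α : Type} (X : Ω → α) {ω : Ω} (hω : 0 < p ω) :
    0 < prob p X (X ω) := by
  refine Finset.sum_pos' (fun ω _ => by split_ifs <;> simp [hp ω]) ⟨ω, Finset.mem_univ _, ?_⟩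
  simpa using hω

/-- The expectation of `F ∘ X` computed from the distribution of `X`. -/
theorem sum_prob_mul {α : Type} [Fintype α] (X : Ω → α) (F : α → ℝ) :
    ∑ a, prob p X a * F a = ∑ ω, p ω * F (X ω) := by
  simp only [prob, Finset.sum_mul, ite_mul, zero_mul]
  rw [Finset.sum_comm]
  simp

theorem sum_prob {α : Type} [Fintype α] (X : Ω → α) : ∑ a, prob p X a = ∑ ω, p ω := by
  simpa using sum_prob_mul (p := p) X fun _ => 1

theorem sum_prob_pair {α γ : Type} [Fintype α] (X : Ω → α) (C : Ω → γ) (c : γ) :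
    ∑ a, prob p (fun ω => (X ω, C ω)) (a, c) = prob p C c := by
  simp only [prob, Prod.mk.injEq, ite_and]
  rw [Finset.sum_comm]
  simp

theorem ent_eq_sum {α : Type} [Fintype α] (X : Ω → α) :
    ent p X = -∑ ω, p ω * Real.logb 2 (prob p X (X ω)) := by
  rw [ent, sum_prob_mul X fun a => Real.logb 2 (prob p X a)]

/-- Entropy depends only on the partition of the sample space into fibres. -/
theorem ent_congr {α β : Type} [Fintype α] [Fintype β] {X : Ω → α} {X' : Ω → β}
    (h : ∀ ω ω', X ω = X ω' ↔ X' ω = X' ω') : ent p X = ent p X' := by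
  simp only [ent_eq_sum, prob, h]

/-- Strong subadditivity of Shannon entropy: `H(A,B,C) + H(C) ≤ H(A,C) + H(B,C)`. -/
theorem ent_strong_subadditive (hp : ∀ ω, 0 ≤ p ω) {α β γ : Type} [Fintype α] [Fintype β]
    [Fintype γ] (A : Ω → α) (B : Ω → β) (C : Ω → γ) :
    ent p (fun ω => (A ω, B ω, C ω)) + ent p C
      ≤ ent p (fun ω => (A ω, C ω)) + ent p (fun ω => (B ω, C ω)) := by
  set P := prob p (fun ω => (A ω, B ω, C ω))
  set PA := prob p (fun ω => (A ω, C ω))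
  set PB := prob p (fun ω => (B ω, C ω))
  set PC := prob p C
  let r : α × β × γ → ℝ := fun x =>
    PA (x.1, x.2.2) * PB (x.2.1, x.2.2) / (P x * PC x.2.2)
  have hr : ∑ ω, p ω * r (A ω, B ω, C ω) ≤ ∑ ω, p ω := by
    rw [← sum_prob_mul (fun ω => (A ω, B ω, C ω)) r]
    calc ∑ x, P x * r x
        ≤ ∑ x : α × β × γ, PA (x.1, x.2.2) * PB (x.2.1, x.2.2) / PC x.2.2 := by
          refine Finset.sum_le_sum fun x _ => ?_
          have hnn : 0 ≤ PA (x.1, x.2.2) * PB (x.2.1, x.2.2) / PC x.2.2 :=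
            div_nonneg (mul_nonneg (prob_nonneg hp _ _) (prob_nonneg hp _ _))
              (prob_nonneg hp _ _)
          rcases eq_or_ne (P x) 0 with h | h
          · simpa [h] using hnn
          · apply le_of_eq
            simp only [r]
            rw [mul_div_assoc', mul_div_mul_left _ _ h]
      _ = ∑ c, (∑ a, PA (a, c)) * (∑ b, PB (b, c)) / PC c := by
          simp only [Fintype.sum_prod_type, Finset.sum_mul_sum, Finset.sum_div]
          rw [Finset.sum_comm]
          simp_rw [Finset.sum_comm (s := (Finset.univ : Finset α)) (t := (Finset.univ : Finset γ))]
          rw [Finset.sum_comm]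
          refine Finset.sum_congr rfl fun c _ => ?_
          rw [Finset.sum_comm]
      _ = ∑ c, PC c := by
          refine Finset.sum_congr rfl fun c _ => ?_
          rw [sum_prob_pair, sum_prob_pair, mul_self_div_self]
      _ = ∑ ω, p ω := sum_prob C
  have hterm : ∀ ω, p ω * (Real.logb 2 (PA (A ω, C ω)) + Real.logb 2 (PB (B ω, C ω))
      - Real.logb 2 (P (A ω, B ω, C ω)) - Real.logb 2 (PC (C ω)))
      ≤ (p ω * r (A ω, B ω, C ω) - p ω) / Real.log 2 := by
    intro ω
    rcases (hp ω).eq_or_lt with h | h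
    · simp [← h]
    have h1 : 0 < PA (A ω, C ω) := prob_apply_pos hp (fun ω => (A ω, C ω)) h
    have h2 : 0 < PB (B ω, C ω) := prob_apply_pos hp (fun ω => (B ω, C ω)) h
    have h3 : 0 < P (A ω, B ω, C ω) := prob_apply_pos hp (fun ω => (A ω, B ω, C ω)) h
    have h4 : 0 < PC (C ω) := prob_apply_pos hp C h
    have hlog : Real.log (r (A ω, B ω, C ω)) = Real.log (PA (A ω, C ω))
        + Real.log (PB (B ω, C ω)) - Real.log (P (A ω, B ω, C ω)) - Real.log (PC (C ω)) := by
      simp only [r]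
      rw [Real.log_div (by positivity) (by positivity), Real.log_mul h1.ne' h2.ne',
        Real.log_mul h3.ne' h4.ne']
      ring
    have hle := Real.log_le_sub_one_of_pos (x := r (A ω, B ω, C ω)) (by positivity)
    simp only [Real.logb, ← add_div, ← sub_div, ← hlog]
    rw [mul_div_assoc']
    have hlog2 : 0 < Real.log 2 := Real.log_pos one_lt_two
    gcongr
    nlinarith
  have hsum := Finset.sum_le_sum fun ω (_ : ω ∈ Finset.univ) => hterm ω
  rw [← Finset.sum_div, Finset.sum_sub_distrib] at hsum
  have hneg := hsum.trans
    (div_nonpos_of_nonpos_of_nonneg (sub_nonpos.2 hr) (Real.log_pos one_lt_two).le)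
  simp only [mul_sub, mul_add, Finset.sum_sub_distrib, Finset.sum_add_distrib] at hneg
  simp only [ent_eq_sum]
  linarith

end Entropy

section Tuples

variable {Ω : Type} {K : ℕ} {α : Fin K → Type}

theorem VJ_eq_iff (V : (i : Fin K) → Ω → α i) (J : Finset (Fin K)) (ω ω' : Ω) :
    VJ V J ω = VJ V J ω' ↔ ∀ j ∈ J, V j ω = V j ω' := by
  simp [VJ, funext_iff]

variable [Fintype Ω] {p : Ω → ℝ} [∀ i, Fintype (α i)]

/-- `J ↦ H(V_J, W)` is submodular. -/
theorem ent_VJ_submodular (hp : ∀ ω, 0 ≤ p ω) (V : (i : Fin K) → Ω → α i) {γ : Type}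
    [Fintype γ] (W : Ω → γ) (A B : Finset (Fin K)) :
    ent p (fun ω => (VJ V (A ∪ B) ω, W ω)) + ent p (fun ω => (VJ V (A ∩ B) ω, W ω))
      ≤ ent p (fun ω => (VJ V A ω, W ω)) + ent p (fun ω => (VJ V B ω, W ω)) := by
  have h := ent_strong_subadditive hp (VJ V A) (VJ V B) (fun ω => (VJ V (A ∩ B) ω, W ω))
  convert h using 2 <;> refine ent_congr fun ω ω' => ?_ <;>
    simp only [Prod.mk.injEq, VJ_eq_iff, Finset.mem_union, Finset.mem_inter] <;> grind

/-- Under conditional independence, `H(V_𝒦 | Q) = ∑ j, H(V_j | Q)`. -/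
theorem CondIndep.ent_univ (hp : ∀ ω, 0 ≤ p ω) {𝒬 : Type} [Fintype 𝒬] {Q : Ω → 𝒬}
    {V : (i : Fin K) → Ω → α i} (hind : CondIndep p Q V) :
    ent p (fun ω => (VJ V Finset.univ ω, Q ω)) - ent p (fun ω => (VJ V ∅ ω, Q ω))
      = ∑ j, (ent p (fun ω => (VJ V {j} ω, Q ω)) - ent p (fun ω => (VJ V ∅ ω, Q ω))) := by
  rcases Nat.eq_zero_or_pos K with rfl | hK
  · simpa using sub_eq_zero.2 (ent_congr fun ω ω' => by simp [VJ_eq_iff])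
  have huniv : ent p (fun ω => (VJ V Finset.univ ω, Q ω))
      = ent p (fun ω => ((fun i => V i ω : (i : Fin K) → α i), Q ω)) :=
    ent_congr fun ω ω' => by
      rw [Prod.mk.injEq, VJ_eq_iff, Prod.mk.injEq, funext_iff]
      simp
  have hempty : ent p (fun ω => (VJ V ∅ ω, Q ω)) = ent p Q :=
    ent_congr fun ω ω' => by simp [VJ_eq_iff]
  have hsingle : ∀ j, ent p (fun ω => (VJ V {j} ω, Q ω)) = ent p (fun ω => (V j ω, Q ω)) :=
    fun j => ent_congr fun ω ω' => by simp [VJ_eq_iff]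
  have hlog : ∀ ω, p ω * Real.logb 2 (prob p
        (fun ω => ((fun i => V i ω : (i : Fin K) → α i), Q ω)) ((fun i => V i ω), Q ω))
      + ((K : ℝ) - 1) * (p ω * Real.logb 2 (prob p Q (Q ω)))
      = ∑ j, p ω * Real.logb 2 (prob p (fun ω => (V j ω, Q ω)) (V j ω, Q ω)) := by
    intro ω
    rcases (hp ω).eq_or_lt with h | h
    · simp [← h]
    have hlogs := congrArg (Real.logb 2) (hind (Q ω) fun i => V i ω)
    rw [Real.logb_mul
        (prob_apply_pos hp (fun ω => ((fun i => V i ω : (i : Fin K) → α i), Q ω)) h).ne'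
        (pow_pos (prob_apply_pos hp Q h) _).ne', Real.logb_pow,
      Real.logb_prod _ _
        (fun j _ => (prob_apply_pos hp (fun ω => (V j ω, Q ω)) h).ne'),
      Nat.cast_sub hK, Nat.cast_one] at hlogs
    rw [← Finset.mul_sum, ← hlogs]
    ring
  have hsum := Finset.sum_congr (rfl : (Finset.univ : Finset Ω) = Finset.univ)
    fun ω _ => hlog ω
  rw [Finset.sum_add_distrib, ← Finset.mul_sum, Finset.sum_comm] at hsum
  simp only [huniv, hempty, hsingle, Finset.sum_sub_distrib, Finset.sum_const,
    Finset.card_univ, Fintype.card_fin, nsmul_eq_mul, ent_eq_sum, Finset.sum_neg_distrib]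
  linarith

end Tuples

section SetFunctions

/-- A submodular set function which is additive on the decomposition of the whole set into
singletons is also supermodular. -/
theorem supermodular_of_submodular_of_univ {ι : Type*} [Fintype ι] [DecidableEq ι]
    {h : Finset ι → ℝ} (hsub : ∀ A B, h (A ∪ B) + h (A ∩ B) ≤ h A + h B)
    (huniv : h Finset.univ - h ∅ = ∑ j, (h {j} - h ∅)) (A B : Finset ι) :
    h A + h B ≤ h (A ∪ B) + h (A ∩ B) := by
  have hle : ∀ J : Finset ι, h J - h ∅ ≤ ∑ j ∈ J, (h {j} - h ∅) := by
    intro J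
    induction J using Finset.induction_on with
    | empty => simp
    | insert a s ha ih =>
      have hs := hsub {a} s
      rw [Finset.singleton_inter_of_notMem ha, ← Finset.insert_eq] at hs
      rw [Finset.sum_insert ha]
      linarith
  have heq : ∀ J : Finset ι, h J - h ∅ = ∑ j ∈ J, (h {j} - h ∅) := by
    intro J
    refine (hle J).antisymm ?_
    have hs := hsub J Jᶜ
    rw [Finset.union_compl, Finset.inter_compl] at hs
    have hadd := Finset.sum_add_sum_compl J fun j => h {j} - h ∅
    linarith [hle Jᶜ]
  have hadd := Finset.sum_union_inter (s₁ := A) (s₂ := B) (f := fun j => h {j} - h ∅)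
  rw [← heq, ← heq, ← heq, ← heq] at hadd
  linarith

theorem mem_compactForm {K t : ℕ} (T : Fin t → Finset (Fin K)) (i : ℕ) (j : Fin K) :
    j ∈ compactForm T i ↔ i ≤ (Finset.univ.filter fun k => j ∈ T k).card := by
  simp only [compactForm, Finset.mem_sup, Finset.mem_powersetCard, Finset.subset_univ,
    true_and, Finset.mem_inf]
  constructor
  · rintro ⟨S, rfl, hS⟩
    exact Finset.card_le_card fun k hk => by simpa using hS k hk
  · intro hi
    obtain ⟨S, hS, hcard⟩ := Finset.exists_subset_card_eq hi
    exact ⟨S, hcard, fun k hk => by simpa using hS hk⟩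

theorem compactForm_zero {K t : ℕ} (T : Fin t → Finset (Fin K)) :
    compactForm T 0 = Finset.univ := by
  ext j
  simp [mem_compactForm]

theorem compactForm_of_lt {K t : ℕ} (T : Fin t → Finset (Fin K)) {i : ℕ} (hi : t < i) :
    compactForm T i = ∅ := by
  simp [compactForm, Finset.powersetCard_eq_empty.2, hi]

theorem compactForm_succ_subset {K t : ℕ} (T : Fin t → Finset (Fin K)) (i : ℕ) :
    compactForm T (i + 1) ⊆ compactForm T i := by
  intro j
  simp only [mem_compactForm]
  omega

/-- Effect on the compact form of adding one set to the list. -/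
theorem compactForm_cons {K t : ℕ} (T : Fin (t + 1) → Finset (Fin K)) (i : ℕ) :
    compactForm T (i + 1) = compactForm (fun k => T (Fin.succ k)) (i + 1)
      ∪ (T 0 ∩ compactForm (fun k => T (Fin.succ k)) i) := by
  ext j
  simp only [Finset.mem_union, Finset.mem_inter, mem_compactForm, Finset.card_filter,
    Fin.sum_univ_succ]
  by_cases h : j ∈ T 0
  · simp only [h, if_true, true_and]
    omega
  · simp only [h, if_false, false_and, or_false, zero_add]

/-- A supermodular set function does not decrease in total under element rearrangement. -/
theorem sum_le_sum_compactForm {K : ℕ} {f : Finset (Fin K) → ℝ}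
    (hf : ∀ A B, f A + f B ≤ f (A ∪ B) + f (A ∩ B)) :
    ∀ (t : ℕ) (T : Fin t → Finset (Fin K)),
      ∑ i, f (T i) ≤ ∑ i ∈ Finset.range t, f (compactForm T (i + 1))
  | 0, _ => by simp
  | t + 1, T => by
    set C := compactForm fun k : Fin t => T k.succ with hC
    have htel : ∀ n, f (T 0) + ∑ i ∈ Finset.range n, f (C (i + 1))
        ≤ ∑ i ∈ Finset.range n, f (compactForm T (i + 1)) + f (T 0 ∩ C n) := by
      intro n
      induction n with
      | zero => simp [hC, compactForm_zero]
      | succ n ih =>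
        have hstep := hf (C (n + 1)) (T 0 ∩ C n)
        have hinter : C (n + 1) ∩ (T 0 ∩ C n) = T 0 ∩ C (n + 1) := by
          rw [Finset.inter_left_comm,
            Finset.inter_eq_left.2 (compactForm_succ_subset _ n)]
        rw [hinter, ← compactForm_cons] at hstep
        rw [Finset.sum_range_succ, Finset.sum_range_succ]
        linarith
    have hlast : compactForm T (t + 1) = T 0 ∩ C t := by
      rw [compactForm_cons, compactForm_of_lt _ (Nat.lt_succ_self t), Finset.empty_union]
    rw [Fin.sum_univ_succ, Finset.sum_range_succ, hlast]
    linarith [htel t, sum_le_sum_compactForm hf t fun k => T k.succ]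

end SetFunctions

/-- Lemma 5 (second half): for any list `T_1, …, T_t` of subsets of `𝒦` with compact
form `T*_{t,1}, …, T*_{t,t}`, the set function `b⁻(T) = I(V_T; Z | Q)`
satisfies `∑ᵢ b⁻(T_i) ≤ ∑ᵢ b⁻(T*_{t,i})`. -/
theorem bminus_sum_le_compactForm {Ω 𝒬 𝒴 𝒵 : Type} [Fintype Ω] [Fintype 𝒬] [Fintype 𝒴]
    [Fintype 𝒵] {K : ℕ} {α : Fin K → Type} [∀ i, Fintype (α i)]
    (p : Ω → ℝ) (hp : ∀ ω, 0 ≤ p ω) (hp1 : ∑ ω : Ω, p ω = 1)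
    (Q : Ω → 𝒬) (Y : Ω → 𝒴) (Z : Ω → 𝒵) (V : (i : Fin K) → Ω → α i)
    (hind : CondIndep p Q V) (t : ℕ) (T : Fin t → Finset (Fin K)) :
    ∑ i : Fin t, condMI p (VJ V (T i)) Z Q
      ≤ ∑ i ∈ Finset.Icc 1 t, condMI p (VJ V (compactForm T i)) Z Q := by
  have hsuper := supermodular_of_submodular_of_univ
    (h := fun J => ent p (fun ω => (VJ V J ω, Q ω))) (ent_VJ_submodular hp V Q)
    (hind.ent_univ hp)
  refine (sum_le_sum_compactForm (f := fun J => condMI p (VJ V J) Z Q) (fun A B => ?_) t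
    T).trans_eq ?_
  · have hsub := ent_VJ_submodular hp V (fun ω => (Z ω, Q ω)) A B
    have hmod := hsuper A B
    simp only [condMI]
    linarith
  · rw [Finset.range_eq_Ico, Finset.sum_Ico_add' (fun i => condMI p (VJ V (compactForm T i)) Z Q)]
    rfl
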